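/- arXiv:2508.06446 — 2 statements merged into one kernel-verified Lean document; each statement's English description precedes it below -/
import Mathlib

section
/- Let d ≥ 1 be an integer and let (Λ, B_r^d) be a robust lattice covering of ℝ^d whose density vol(B_r^d)/det(Λ) is at most ν_d. Then the collection of fundamental parallelepipeds of Λ that are contained in the ball B_{2r}^d is finite, of cardinality at most (4^d · d^{d/2} + 1)^{d·2^d}. -/
/-!
A fundamental parallelepiped inside a ball of radius `r` supplies a basis `v` of `ℝᵈ` consisting of
lattice vectors of norm at most `2r`. Let `b` be a lattice basis. By Cramer's rule a point `y` is
determined by the numbers `det_b (v₁, …, y, …, v_d)`, with `y` in the `i`-th place, and these are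
integers when `y` is a lattice point. They are linear in `y`, so by Hadamard's inequality moving `y`
by at most `2r` changes each of them by at most `(2r)ᵈ / det Λ`, and this is at most `2ᵈ d^(d/2)` by
the density hypothesis. Hence a ball of radius `2r` contains at most `(2 · 2ᵈ d^(d/2) + 1)ᵈ` lattice
points. A parallelepiped is determined by `d + 1` of its vertices, and `d + 1 ≤ 2ᵈ`.
-/

open MeasureTheory Pointwise

noncomputable section

/-- The lattice generated by vectors `b`. -/
def latticeSet {n : ℕ} (b : Fin n → EuclideanSpace ℝ (Fin n)) :
    Set (EuclideanSpace ℝ (Fin n)) :=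
  {x | ∃ c : Fin n → ℤ, x = ∑ i, (c i : ℝ) • b i}

/-- The determinant of the lattice generated by `b`. -/
def latticeDet {n : ℕ} (b : Fin n → EuclideanSpace ℝ (Fin n)) : ℝ :=
  |(Matrix.of fun i j => b j i).det|

/-- Vertex set of the parallelepiped starting at `x` generated by `v`. -/
def vertexSet {n : ℕ} (x : EuclideanSpace ℝ (Fin n))
    (v : Fin n → EuclideanSpace ℝ (Fin n)) : Set (EuclideanSpace ℝ (Fin n)) :=
  {y | ∃ lam : Fin n → ℝ, (∀ i, lam i = 0 ∨ lam i = 1) ∧ y = x + ∑ i, lam i • v i}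

/-- `P` is a fundamental parallelepiped of the lattice `Λ` with determinant `detΛ`. -/
def IsFundParallelepiped {n : ℕ} (Λ : Set (EuclideanSpace ℝ (Fin n))) (detΛ : ℝ)
    (P : Set (EuclideanSpace ℝ (Fin n))) : Prop :=
  ∃ x v, LinearIndependent ℝ v ∧ P = convexHull ℝ (vertexSet x v) ∧
    vertexSet x v ⊆ Λ ∧ volume P = ENNReal.ofReal detΛ

/-- `(Λ(b), B_r)` is a lattice covering of `ℝⁿ`. -/
def IsLatticeCovering {n : ℕ} (b : Fin n → EuclideanSpace ℝ (Fin n)) (r : ℝ) : Prop :=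
  LinearIndependent ℝ b ∧ latticeSet b + Metric.closedBall 0 r = Set.univ

/-- `(Λ(b), B_r)` is a robust lattice covering of `ℝⁿ`. -/
def IsRobustCovering {n : ℕ} (b : Fin n → EuclideanSpace ℝ (Fin n)) (r : ℝ) : Prop :=
  IsLatticeCovering b r ∧
  ∀ c : EuclideanSpace ℝ (Fin n),
    ∃ P, IsFundParallelepiped (latticeSet b) (latticeDet b) P ∧
      P ⊆ Metric.closedBall c r

/-- The density of the lattice covering `(Λ(b), B_r)`. -/
def coveringDensity {n : ℕ} (b : Fin n → EuclideanSpace ℝ (Fin n)) (r : ℝ) : ℝ :=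
  (volume (Metric.closedBall (0 : EuclideanSpace ℝ (Fin n)) r)).toReal / latticeDet b

/-- `ν_d`, the volume of the ball of radius `√d` in `ℝ^d`. -/
def nu (d : ℕ) : ℝ :=
  (volume (Metric.closedBall (0 : EuclideanSpace ℝ (Fin d)) (Real.sqrt d))).toReal

open Module

section IntegerBox

variable {𝕜 : Type*} [Field 𝕜] [LinearOrder 𝕜] [IsStrictOrderedRing 𝕜] [FloorRing 𝕜]

theorem card_Icc_ceil_floor_le {a M : 𝕜} (hM : 0 ≤ M) :
    ((Finset.Icc ⌈a - M⌉ ⌊a + M⌋).card : 𝕜) ≤ 2 * M + 1 := by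
  have hlen : ((⌊a + M⌋ + 1 - ⌈a - M⌉ : ℤ) : 𝕜) ≤ 2 * M + 1 := by
    push_cast
    linarith [Int.floor_le (a + M), Int.le_ceil (a - M)]
  rw [Int.card_Icc, ← Int.cast_natCast, Int.toNat_eq_max, Int.cast_max, Int.cast_zero]
  exact max_le hlen (by positivity)

theorem finite_and_ncard_le_of_injOn_int_valued {α ι : Type*} [Fintype ι] {s : Set α}
    {f : α → ι → 𝕜} {a : ι → 𝕜} {M : 𝕜} (hM : 0 ≤ M) (hinj : s.InjOn f)
    (hint : ∀ x ∈ s, ∀ i, f x i ∈ Set.range (Int.cast : ℤ → 𝕜))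
    (hdist : ∀ x ∈ s, ∀ i, |f x i - a i| ≤ M) :
    s.Finite ∧ (s.ncard : 𝕜) ≤ (2 * M + 1) ^ Fintype.card ι := by
  classical
  let I : ι → Finset 𝕜 := fun i => (Finset.Icc ⌈a i - M⌉ ⌊a i + M⌋).image Int.cast
  have hmaps : s.MapsTo f (Fintype.piFinset I : Set (ι → 𝕜)) := by
    intro x hx
    refine Finset.mem_coe.2 (Fintype.mem_piFinset.2 fun i => ?_)
    obtain ⟨k, hk⟩ := hint x hx i
    obtain ⟨hlo, hhi⟩ := abs_le.1 (hdist x hx i)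
    refine Finset.mem_image.2 ⟨k, Finset.mem_Icc.2 ⟨Int.ceil_le.2 ?_, Int.le_floor.2 ?_⟩, hk⟩
    all_goals linarith
  refine ⟨.of_injOn hmaps hinj (Finset.finite_toSet _), ?_⟩
  calc (s.ncard : 𝕜) ≤ ((Fintype.piFinset I).card : 𝕜) := by
        rw [← Set.ncard_coe_finset]
        exact_mod_cast Set.ncard_le_ncard_of_injOn f hmaps hinj
    _ = ∏ i, ((I i).card : 𝕜) := by rw [Fintype.card_piFinset, Nat.cast_prod]
    _ ≤ ∏ _i : ι, (2 * M + 1) := Finset.prod_le_prod (fun _ _ => Nat.cast_nonneg _) fun i _ =>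
        (Nat.cast_le.2 Finset.card_image_le).trans (card_Icc_ceil_floor_le hM)
    _ = (2 * M + 1) ^ Fintype.card ι := by rw [Finset.prod_const, Finset.card_univ]

end IntegerBox

section BasisDet

variable {ι R M : Type*} [Fintype ι] [DecidableEq ι] [CommRing R] [AddCommGroup M] [Module R M]

theorem basis_det_mem_range_algebraMap {A : Type*} [CommRing A] [Algebra A R] [Module A M]
    [IsScalarTower A R M] (b : Basis ι R M) {w : ι → M}
    (hw : ∀ i, w i ∈ Submodule.span A (Set.range b)) :
    b.det w ∈ Set.range (algebraMap A R) := by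
  choose C hC using fun j => (Submodule.mem_span_range_iff_exists_fun A).1 (hw j)
  refine ⟨(Matrix.of fun i j => C j i).det, ?_⟩
  rw [RingHom.map_det, Basis.det_apply]
  congr 1
  ext i j
  simp [Basis.toMatrix_apply, ← hC, ← algebraMap_smul R, Finsupp.single_apply]

theorem basis_det_update (b v : Basis ι R M) (i : ι) (y : M) :
    b.det (Function.update v i y) = b.det v * v.repr y i := by
  have hself : v.det (Function.update v i y) = v.repr y i := by
    rw [Basis.det_apply, Basis.toMatrix_update, Basis.toMatrix_self, ← Matrix.cramer_apply,
      Matrix.cramer_one, Module.End.one_apply]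
  rw [← hself]
  exact DFunLike.congr_fun (b.det.eq_smul_basis_det v) _

theorem injective_basis_det_update (b v : Basis ι R M) :
    Function.Injective fun y i => b.det (Function.update v i y) := by
  intro y z h
  refine v.ext_elem fun i => (b.isUnit_det v).mul_left_cancel ?_
  simpa only [basis_det_update] using congrFun h i

end BasisDet

section LatticePoints

variable {n : ℕ} {E : Type*} [NormedAddCommGroup E] [InnerProductSpace ℝ E]
  [Fact (finrank ℝ E = n)] (o : Orientation ℝ E (Fin n))

theorem abs_volumeForm_basis_pos (b : Basis (Fin n) ℝ E) : 0 < |o.volumeForm b| := by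
  have : FiniteDimensional ℝ E := .of_basis b
  let e : OrthonormalBasis (Fin n) ℝ E := (stdOrthonormalBasis ℝ E).reindex (finCongr Fact.out)
  rw [o.volumeForm_robust' e]
  exact abs_pos.2 (e.toBasis.isUnit_det b).ne_zero

theorem abs_basis_det_le_prod_norm_div (b : Basis (Fin n) ℝ E) (w : Fin n → E) :
    |b.det w| ≤ (∏ i, ‖w i‖) / |o.volumeForm b| := by
  have hω : o.volumeForm w = o.volumeForm b * b.det w :=
    DFunLike.congr_fun (o.volumeForm.eq_smul_basis_det b) w
  rw [le_div_iff₀' (abs_volumeForm_basis_pos o b), ← abs_mul, ← hω]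
  exact o.abs_volumeForm_apply_le w

theorem finite_and_ncard_span_int_inter_closedBall_le (b v : Basis (Fin n) ℝ E) {R : ℝ}
    (hv : ∀ i, v i ∈ Submodule.span ℤ (Set.range b)) (hvR : ∀ i, ‖v i‖ ≤ R) (c : E) :
    ((Submodule.span ℤ (Set.range b) : Set E) ∩ Metric.closedBall c R).Finite ∧
      (((Submodule.span ℤ (Set.range b) : Set E) ∩ Metric.closedBall c R).ncard : ℝ) ≤
        (2 * (R ^ n / |o.volumeForm b|) + 1) ^ n := by
  have hprod {w : Fin n → E} (hw : ∀ i, ‖w i‖ ≤ R) : ∏ i, ‖w i‖ ≤ R ^ n := by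
    simpa using Finset.prod_le_prod (s := Finset.univ) (fun i _ => norm_nonneg (w i))
      fun i _ => hw i
  have hR : 0 ≤ R ^ n := (Finset.prod_nonneg fun i _ => norm_nonneg (v i)).trans (hprod hvR)
  have hcount := finite_and_ncard_le_of_injOn_int_valued
    (s := (Submodule.span ℤ (Set.range b) : Set E) ∩ Metric.closedBall c R)
    (f := fun y i => b.det (Function.update v i y))
    (a := fun i => b.det (Function.update v i c))
    (M := R ^ n / |o.volumeForm b|) (by positivity) (injective_basis_det_update b v).injOn ?_ ?_
  · simpa using hcount
  · rintro y ⟨hy, -⟩ i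
    exact basis_det_mem_range_algebraMap b
      (Function.forall_update_iff v (fun _ x => x ∈ Submodule.span ℤ (Set.range b)) |>.2
        ⟨hy, fun j _ => hv j⟩)
  · rintro y ⟨-, hy⟩ i
    rw [← AlternatingMap.map_update_sub]
    refine (abs_basis_det_le_prod_norm_div o b _).trans
      (div_le_div_of_nonneg_right (hprod ?_) (abs_nonneg _))
    exact Function.forall_update_iff v (fun _ x => ‖x‖ ≤ R) |>.2
      ⟨mem_closedBall_iff_norm.1 hy, fun j _ => hvR j⟩

end LatticePoints

section Parallelepipeds

variable {n : ℕ} {b v : Fin n → EuclideanSpace ℝ (Fin n)} {r : ℝ}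

theorem latticeSet_eq_span (b : Fin n → EuclideanSpace ℝ (Fin n)) :
    latticeSet b = Submodule.span ℤ (Set.range b) := by
  ext x
  simp only [latticeSet, Set.mem_ofPred_eq, SetLike.mem_coe,
    Submodule.mem_span_range_iff_exists_fun, Int.cast_smul_eq_zsmul, eq_comm]

theorem latticeDet_eq_abs_volumeForm [Fact (finrank ℝ (EuclideanSpace ℝ (Fin n)) = n)]
    (o : Orientation ℝ (EuclideanSpace ℝ (Fin n)) (Fin n))
    (b : Fin n → EuclideanSpace ℝ (Fin n)) : latticeDet b = |o.volumeForm b| := by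
  rw [o.volumeForm_robust' (EuclideanSpace.basisFun (Fin n) ℝ), Basis.det_apply]
  rfl

theorem mem_vertexSet_self (x : EuclideanSpace ℝ (Fin n)) (v : Fin n → EuclideanSpace ℝ (Fin n)) :
    x ∈ vertexSet x v :=
  ⟨0, fun _ => .inl rfl, by simp⟩

theorem add_mem_vertexSet (x : EuclideanSpace ℝ (Fin n)) (v : Fin n → EuclideanSpace ℝ (Fin n))
    (i : Fin n) : x + v i ∈ vertexSet x v :=
  ⟨Pi.single i 1, fun j => by by_cases h : j = i <;> simp [h],
    by simp [Pi.single_apply]⟩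

theorem finite_and_ncard_convexHull_vertexSet_le {S : Set (EuclideanSpace ℝ (Fin n))}
    (hS : S.Finite) :
    {P | ∃ x v, P = convexHull ℝ (vertexSet x v) ∧ vertexSet x v ⊆ S}.Finite ∧
      {P | ∃ x v, P = convexHull ℝ (vertexSet x v) ∧ vertexSet x v ⊆ S}.ncard ≤
        S.ncard ^ (n + 1) := by
  classical
  let K : Finset (Fin (n + 1) → EuclideanSpace ℝ (Fin n)) := Fintype.piFinset fun _ => hS.toFinset
  let hull (p : Fin (n + 1) → EuclideanSpace ℝ (Fin n)) : Set (EuclideanSpace ℝ (Fin n)) :=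
    convexHull ℝ (vertexSet (p 0) fun i => p i.succ - p 0)
  have hcover : {P | ∃ x v, P = convexHull ℝ (vertexSet x v) ∧ vertexSet x v ⊆ S} ⊆
      hull '' K := by
    rintro _ ⟨x, v, rfl, hxv⟩
    refine ⟨Fin.cons x fun i => x + v i, ?_, by simp [hull]⟩
    refine Finset.mem_coe.2 (Fintype.mem_piFinset.2 <| Fin.cases ?_ fun i => ?_)
    · simpa using hxv (mem_vertexSet_self x v)
    · simpa using hxv (add_mem_vertexSet x v i)
  have hfin : (hull '' K).Finite := K.finite_toSet.image hull
  refine ⟨hfin.subset hcover, ?_⟩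
  calc _ ≤ (hull '' K).ncard := Set.ncard_le_ncard hcover hfin
    _ ≤ K.card := by
      rw [← Set.ncard_coe_finset]
      exact Set.ncard_image_le K.finite_toSet
    _ = S.ncard ^ (n + 1) := by
      rw [Fintype.card_piFinset_const, Set.ncard_eq_toFinset_card S hS]

theorem finite_and_ncard_isFundParallelepiped_le {R : ℝ} (hb : LinearIndependent ℝ b)
    (hv : LinearIndependent ℝ v) (hvΛ : ∀ i, v i ∈ latticeSet b) (hvR : ∀ i, ‖v i‖ ≤ R)
    (c : EuclideanSpace ℝ (Fin n)) :
    {P | IsFundParallelepiped (latticeSet b) (latticeDet b) P ∧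
        P ⊆ Metric.closedBall c R}.Finite ∧
      ({P | IsFundParallelepiped (latticeSet b) (latticeDet b) P ∧
        P ⊆ Metric.closedBall c R}.ncard : ℝ) ≤
        (2 * (R ^ n / latticeDet b) + 1) ^ (n * (n + 1)) := by
  have : Fact (finrank ℝ (EuclideanSpace ℝ (Fin n)) = n) := ⟨finrank_euclideanSpace_fin⟩
  let o := (EuclideanSpace.basisFun (Fin n) ℝ).toBasis.orientation
  obtain ⟨hfin, hcard⟩ : (latticeSet b ∩ Metric.closedBall c R).Finite ∧
      ((latticeSet b ∩ Metric.closedBall c R).ncard : ℝ) ≤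
        (2 * (R ^ n / latticeDet b) + 1) ^ n := by
    simp only [latticeSet_eq_span, latticeDet_eq_abs_volumeForm o] at hvΛ ⊢
    simpa using finite_and_ncard_span_int_inter_closedBall_le o
      (basisOfLinearIndependentOfCardEqFinrank' b hb (by simp))
      (basisOfLinearIndependentOfCardEqFinrank' v hv (by simp)) (by simpa) (by simpa) c
  have hvert : {P | IsFundParallelepiped (latticeSet b) (latticeDet b) P ∧
      P ⊆ Metric.closedBall c R} ⊆ {P | ∃ x v, P = convexHull ℝ (vertexSet x v) ∧
        vertexSet x v ⊆ latticeSet b ∩ Metric.closedBall c R} := by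
    rintro _ ⟨⟨x, w, -, rfl, hΛ, -⟩, hball⟩
    exact ⟨x, w, rfl, Set.subset_inter hΛ ((subset_convexHull ℝ _).trans hball)⟩
  obtain ⟨hfinP, hcardP⟩ := finite_and_ncard_convexHull_vertexSet_le hfin
  refine ⟨hfinP.subset hvert, ?_⟩
  calc _ ≤ ((latticeSet b ∩ Metric.closedBall c R).ncard : ℝ) ^ (n + 1) := by
        exact_mod_cast (Set.ncard_le_ncard hvert hfinP).trans hcardP
    _ ≤ ((2 * (R ^ n / latticeDet b) + 1) ^ n) ^ (n + 1) := by gcongr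
    _ = _ := (pow_mul _ _ _).symm

theorem coveringDensity_le_nu_iff (hr : 0 ≤ r) :
    coveringDensity b r ≤ nu n ↔ r ^ n / latticeDet b ≤ √n ^ n := by
  have hV : 0 < volume.real (Metric.ball (0 : EuclideanSpace ℝ (Fin n)) 1) :=
    ENNReal.toReal_pos (Metric.measure_ball_pos _ _ one_pos).ne' measure_ball_lt_top.ne
  simp only [coveringDensity, nu, ← measureReal_def]
  rw [Measure.addHaar_real_closedBall _ _ hr, Measure.addHaar_real_closedBall _ _ (by positivity),
    finrank_euclideanSpace_fin, mul_div_right_comm, mul_le_mul_iff_left₀ hV]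

theorem IsRobustCovering.exists_linearIndependent_norm_le (h : IsRobustCovering b r) :
    ∃ v : Fin n → EuclideanSpace ℝ (Fin n), LinearIndependent ℝ v ∧
      (∀ i, v i ∈ latticeSet b) ∧ ∀ i, ‖v i‖ ≤ 2 * r := by
  obtain ⟨_, ⟨x, v, hv, rfl, hΛ, -⟩, hball⟩ := h.2 0
  have hvert := (subset_convexHull ℝ (vertexSet x v)).trans hball
  refine ⟨v, hv, fun i => ?_, fun i => ?_⟩
  · rw [latticeSet_eq_span] at hΛ ⊢
    simpa using sub_mem (hΛ (add_mem_vertexSet x v i)) (hΛ (mem_vertexSet_self x v))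
  · have hx : ‖x‖ ≤ r := mem_closedBall_zero_iff.1 (hvert (mem_vertexSet_self x v))
    have hxv : ‖x + v i‖ ≤ r := mem_closedBall_zero_iff.1 (hvert (add_mem_vertexSet x v i))
    simpa [two_mul] using norm_sub_le_of_le hxv hx

end Parallelepipeds

theorem two_mul_two_pow_mul_add_one_pow_le {s : ℝ} (hs : 0 ≤ s) {d : ℕ} (hd : 1 ≤ d) :
    (2 * (2 ^ d * s) + 1) ^ (d * (d + 1)) ≤ (4 ^ d * s + 1) ^ (d * 2 ^ d) := by
  have htwo : (2 : ℝ) ≤ 2 ^ d := le_self_pow₀ one_le_two (by omega)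
  calc (2 * (2 ^ d * s) + 1) ^ (d * (d + 1)) ≤ (2 ^ d * (2 ^ d * s) + 1) ^ (d * (d + 1)) := by
        gcongr
    _ = (4 ^ d * s + 1) ^ (d * (d + 1)) := by
        rw [← mul_assoc, ← mul_pow]; norm_num
    _ ≤ (4 ^ d * s + 1) ^ (d * 2 ^ d) := by
        have hexp : d + 1 ≤ 2 ^ d := Nat.lt_two_pow_self
        gcongr
        exact le_add_of_nonneg_left (by positivity)

theorem fund_parallelepipeds_in_double_ball_general (d : ℕ)
    (b v : Fin d → EuclideanSpace ℝ (Fin d)) (r : ℝ) (c : EuclideanSpace ℝ (Fin d))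
    (hb : LinearIndependent ℝ b) (hv : LinearIndependent ℝ v) (hvΛ : ∀ i, v i ∈ latticeSet b)
    (hvr : ∀ i, ‖v i‖ ≤ 2 * r) (hden : coveringDensity b r ≤ nu d) :
    {P : Set (EuclideanSpace ℝ (Fin d)) |
        IsFundParallelepiped (latticeSet b) (latticeDet b) P ∧
        P ⊆ Metric.closedBall c (2 * r)}.Finite ∧
    (({P : Set (EuclideanSpace ℝ (Fin d)) |
        IsFundParallelepiped (latticeSet b) (latticeDet b) P ∧
        P ⊆ Metric.closedBall c (2 * r)}.ncard : ℝ) ≤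
      (4 ^ d * (d : ℝ) ^ ((d : ℝ) / 2) + 1) ^ (d * 2 ^ d)) := by
  obtain ⟨hfin, hcard⟩ := finite_and_ncard_isFundParallelepiped_le hb hv hvΛ hvr c
  refine ⟨hfin, hcard.trans ?_⟩
  obtain rfl | hd := d.eq_zero_or_pos
  · simp
  have hr : 0 ≤ r := by linarith [(norm_nonneg _).trans (hvr ⟨0, hd⟩)]
  have hdet : 0 ≤ latticeDet b := abs_nonneg _
  have hratio : (2 * r) ^ d / latticeDet b ≤ 2 ^ d * √d ^ d := by
    rw [mul_pow, mul_div_assoc]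
    gcongr
    exact (coveringDensity_le_nu_iff hr).1 hden
  rw [Real.rpow_div_two_eq_sqrt _ (by positivity), Real.rpow_natCast]
  calc (2 * ((2 * r) ^ d / latticeDet b) + 1) ^ (d * (d + 1))
      ≤ (2 * (2 ^ d * √d ^ d) + 1) ^ (d * (d + 1)) := by gcongr
    _ ≤ (4 ^ d * √d ^ d + 1) ^ (d * 2 ^ d) :=
        two_mul_two_pow_mul_add_one_pow_le (by positivity) hd

/-- **Lemma 3.1.** For a robust lattice covering `(Λ, B_r)` of `ℝ^d` with density at most
`ν_d`, the number of fundamental parallelepipeds of `Λ` contained in `B_{2r}` is at most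
`(4^d d^{d/2} + 1)^{d·2^d}`. -/
theorem fund_parallelepipeds_in_double_ball (d : ℕ) (hd : 1 ≤ d)
    (b : Fin d → EuclideanSpace ℝ (Fin d)) (r : ℝ)
    (hrob : IsRobustCovering b r) (hden : coveringDensity b r ≤ nu d) :
    {P : Set (EuclideanSpace ℝ (Fin d)) |
        IsFundParallelepiped (latticeSet b) (latticeDet b) P ∧
        P ⊆ Metric.closedBall 0 (2 * r)}.Finite ∧
    (({P : Set (EuclideanSpace ℝ (Fin d)) |
        IsFundParallelepiped (latticeSet b) (latticeDet b) P ∧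
        P ⊆ Metric.closedBall 0 (2 * r)}.ncard : ℝ) ≤
      (4 ^ d * (d : ℝ) ^ ((d : ℝ) / 2) + 1) ^ (d * 2 ^ d)) := by
  obtain ⟨v, hv, hvΛ, hvr⟩ := hrob.exists_linearIndependent_norm_le
  exact fund_parallelepipeds_in_double_ball_general d b v r 0 hrob.1.1 hv hvΛ hvr hden

end
end

section
/- Let n ≥ 1 be an integer. Every robust lattice covering (Λ, B_rⁿ) of ℝⁿ has density vol(B_rⁿ)/det(Λ) ≥ ν_n/2ⁿ. In particular, the optimal robust lattice covering density of ℝⁿ satisfies Θ̃_n ≥ ν_n/2ⁿ. -/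
open MeasureTheory Pointwise

noncomputable section

/-!
Let a closed ball of radius `r` contain a parallelepiped with edges `v₁, …, vₙ`. Starting from its
centre, add `± vᵢ / 2` one edge at a time, each time with the sign for which the squared distance to
the centre of the ball grows by at least `‖vᵢ‖² / 4`. This reaches a vertex, so `∑ ‖vᵢ‖² ≤ 4 r²`,
and Hadamard's inequality followed by AM-GM bounds the volume by `(2 r / √n)ⁿ`. For a fundamental
parallelepiped of a lattice this volume is the determinant.

The bound on the infimum also needs a robust covering to exist, as `sInf ∅ = 0`. Every lattice is
robust with radius the diameter of the cell of a basis, since translates of this cell by lattice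
vectors cover the space.
-/

section Inequalities

variable {ι E : Type*} [NormedAddCommGroup E] [InnerProductSpace ℝ E]

lemma exists_sign_norm_sq_add_norm_sq_le (p w : E) :
    ∃ ε : ℝ, (ε = 1 ∨ ε = -1) ∧ ‖p‖ ^ 2 + ‖w‖ ^ 2 ≤ ‖p + ε • w‖ ^ 2 := by
  rcases le_total 0 (inner ℝ p w) with h | h
  · refine ⟨1, .inl rfl, ?_⟩
    rw [one_smul, norm_add_sq_real]
    linarith
  · refine ⟨-1, .inr rfl, ?_⟩
    rw [neg_one_smul, ← sub_eq_add_neg, norm_sub_sq_real]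
    linarith

lemma exists_signs_norm_sq_add_sum_norm_sq_le (p : E) (w : ι → E) (s : Finset ι) :
    ∃ ε : ι → ℝ, (∀ i, ε i = 1 ∨ ε i = -1) ∧
      ‖p‖ ^ 2 + ∑ i ∈ s, ‖w i‖ ^ 2 ≤ ‖p + ∑ i ∈ s, ε i • w i‖ ^ 2 := by
  classical
  induction s using Finset.induction_on with
  | empty => exact ⟨1, fun _ ↦ .inl rfl, by simp⟩
  | insert a s ha ih =>
    obtain ⟨ε, hε, hle⟩ := ih
    obtain ⟨δ, hδ, hstep⟩ :=
      exists_sign_norm_sq_add_norm_sq_le (p + ∑ i ∈ s, ε i • w i) (w a)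
    have hsum : ∑ i ∈ s, Function.update ε a δ i • w i = ∑ i ∈ s, ε i • w i :=
      Finset.sum_congr rfl fun i hi ↦ by rw [Function.update_of_ne (ne_of_mem_of_not_mem hi ha)]
    refine ⟨Function.update ε a δ, fun i ↦ ?_, ?_⟩
    · rcases eq_or_ne i a with rfl | hi
      · simpa using hδ
      · simpa [hi] using hε i
    · rw [Finset.sum_insert ha, Finset.sum_insert ha, hsum, Function.update_self,
        add_comm (δ • w a), ← add_assoc p]
      linarith

lemma sum_norm_sq_le_of_vadd_parallelepiped_subset_closedBall [Fintype ι] {x c : E} {v : ι → E}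
    {r : ℝ} (h : x +ᵥ parallelepiped v ⊆ Metric.closedBall c r) :
    ∑ i, ‖v i‖ ^ 2 ≤ (2 * r) ^ 2 := by
  -- Doubling the vector from `c` to the centre of the parallelepiped avoids halving the `v i`.
  obtain ⟨ε, hε, hle⟩ := exists_signs_norm_sq_add_sum_norm_sq_le
    ((2 : ℝ) • (x - c) + ∑ i, v i) v Finset.univ
  set y := x + ∑ i, ((1 + ε i) / 2) • v i with hy
  have hyr : ‖y - c‖ ≤ r := by
    refine mem_closedBall_iff_norm.1 (h (Set.vadd_mem_vadd_set
      ((mem_parallelepiped_iff _ _).2 ⟨_, ⟨fun i ↦ ?_, fun i ↦ ?_⟩, rfl⟩))) <;>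
    rcases hε i with hi | hi <;> norm_num [hi]
  have hvertex : (2 : ℝ) • (x - c) + ∑ i, v i + ∑ i, ε i • v i = (2 : ℝ) • (y - c) := by
    rw [add_assoc, ← Finset.sum_add_distrib, hy, add_sub_right_comm, smul_add, Finset.smul_sum]
    congr! 2 with i
    module
  calc ∑ i, ‖v i‖ ^ 2 ≤ ‖(2 : ℝ) • (y - c)‖ ^ 2 := by
        rw [← hvertex]
        exact (le_add_of_nonneg_left (sq_nonneg _)).trans hle
    _ = (2 * ‖y - c‖) ^ 2 := by rw [norm_smul, Real.norm_ofNat]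
    _ ≤ (2 * r) ^ 2 := by gcongr

lemma card_pow_mul_prod_le_sum_pow (s : Finset ι) (z : ι → ℝ) (hz : ∀ i ∈ s, 0 ≤ z i) :
    (s.card : ℝ) ^ s.card * ∏ i ∈ s, z i ≤ (∑ i ∈ s, z i) ^ s.card := by
  rcases s.eq_empty_or_nonempty with rfl | hs
  · simp
  have hprod : 0 ≤ ∏ i ∈ s, z i := Finset.prod_nonneg hz
  have hmean : (∏ i ∈ s, z i) ^ (s.card : ℝ)⁻¹ ≤ (∑ i ∈ s, z i) / s.card := by
    simpa using Real.geom_mean_le_arith_mean s 1 z (by simp) (by simpa using hs) hz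
  have hpow := pow_le_pow_left₀ (Real.rpow_nonneg hprod _) hmean s.card
  rwa [Real.rpow_inv_natCast_pow hprod hs.card_ne_zero, div_pow, le_div_iff₀'
    (pow_pos (mod_cast hs.card_pos) _)] at hpow

lemma sqrt_card_pow_mul_prod_le_pow [Fintype ι] {a : ι → ℝ} {R : ℝ} (hR : 0 ≤ R)
    (h : ∑ i, a i ^ 2 ≤ R ^ 2) :
    √(Fintype.card ι) ^ Fintype.card ι * ∏ i, a i ≤ R ^ Fintype.card ι := by
  refine le_of_sq_le_sq ?_ (by positivity)
  calc (√(Fintype.card ι) ^ Fintype.card ι * ∏ i, a i) ^ 2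
      = (Fintype.card ι : ℝ) ^ Fintype.card ι * ∏ i, a i ^ 2 := by
        rw [mul_pow, pow_right_comm, Real.sq_sqrt (Nat.cast_nonneg _), Finset.prod_pow]
    _ ≤ (∑ i, a i ^ 2) ^ Fintype.card ι :=
        card_pow_mul_prod_le_sum_pow Finset.univ _ fun _ _ ↦ sq_nonneg _
    _ ≤ (R ^ 2) ^ Fintype.card ι := by gcongr
    _ = (R ^ Fintype.card ι) ^ 2 := pow_right_comm ..

end Inequalities

section Parallelepipeds

variable {ι E : Type*} [Fintype ι]

lemma isCompact_parallelepiped [AddCommGroup E] [Module ℝ E] [TopologicalSpace E]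
    [ContinuousAdd E] [ContinuousSMul ℝ E] (v : ι → E) :
    IsCompact (parallelepiped v) :=
  isCompact_Icc.image (by fun_prop)

lemma measure_parallelepiped_pos [NormedAddCommGroup E] [NormedSpace ℝ E] [MeasurableSpace E]
    (μ : Measure E) [μ.IsOpenPosMeasure] {v : ι → E} (hv : LinearIndependent ℝ v)
    (hspan : ⊤ ≤ Submodule.span ℝ (Set.range v)) :
    0 < μ (parallelepiped v) := by
  have hinterior := (Module.Basis.mk hv hspan).parallelepiped.interior_nonempty
  rw [Module.Basis.coe_parallelepiped, Module.Basis.coe_mk] at hinterior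
  exact Measure.measure_pos_of_nonempty_interior μ hinterior

end Parallelepipeds

section Volume

variable {n : ℕ} {E : Type*} [NormedAddCommGroup E] [InnerProductSpace ℝ E]
  [FiniteDimensional ℝ E] [MeasurableSpace E] [BorelSpace E] [Fact (Module.finrank ℝ E = n)]

lemma volume_real_parallelepiped_le_prod_norm (v : Fin n → E) :
    volume.real (parallelepiped v) ≤ ∏ i, ‖v i‖ := by
  let o : Orientation ℝ E (Fin n) :=
    ((stdOrthonormalBasis ℝ E).reindex (finCongr Fact.out)).toBasis.orientation
  rw [measureReal_def, ← o.measure_eq_volume, AlternatingMap.measure_parallelepiped,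
    ENNReal.toReal_ofReal (abs_nonneg _)]
  exact o.abs_volumeForm_apply_le v

lemma sqrt_pow_mul_volume_real_parallelepiped_le {x c : E} {v : Fin n → E} {r : ℝ} (hr : 0 ≤ r)
    (h : x +ᵥ parallelepiped v ⊆ Metric.closedBall c r) :
    √n ^ n * volume.real (parallelepiped v) ≤ (2 * r) ^ n :=
  calc √n ^ n * volume.real (parallelepiped v) ≤ √n ^ n * ∏ i, ‖v i‖ := by
        gcongr
        exact volume_real_parallelepiped_le_prod_norm v
    _ ≤ (2 * r) ^ n := by
        simpa using sqrt_card_pow_mul_prod_le_pow (by positivity)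
          (sum_norm_sq_le_of_vadd_parallelepiped_subset_closedBall h)

end Volume

section Lattices

variable {n : ℕ}

lemma convexHull_vertexSet (x : EuclideanSpace ℝ (Fin n)) (v : Fin n → EuclideanSpace ℝ (Fin n)) :
    convexHull ℝ (vertexSet x v) = x +ᵥ parallelepiped v := by
  rw [parallelepiped_eq_convexHull, ← convexHull_vadd]
  congr 1
  ext y
  simp only [vertexSet, Set.mem_ofPred_eq, Set.mem_vadd_set, Set.mem_fintype_sum, vadd_eq_add]
  constructor
  · rintro ⟨lam, hlam, rfl⟩
    exact ⟨_, ⟨fun i ↦ lam i • v i, fun i ↦ by rcases hlam i with h | h <;> simp [h], rfl⟩, rfl⟩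
  · rintro ⟨_, ⟨g, hg, rfl⟩, rfl⟩
    have hcoeff (i) : ∃ t : ℝ, (t = 0 ∨ t = 1) ∧ g i = t • v i := by
      rcases hg i with h | h
      · exact ⟨0, .inl rfl, by simpa using h⟩
      · exact ⟨1, .inr rfl, by simpa using h⟩
    choose lam hlam hg using hcoeff
    exact ⟨lam, hlam, by simp_rw [hg]⟩

lemma volume_parallelepiped_eq_latticeDet (v : Fin n → EuclideanSpace ℝ (Fin n)) :
    volume (parallelepiped v) = ENNReal.ofReal (latticeDet v) := by
  rw [← (EuclideanSpace.basisFun (Fin n) ℝ).addHaar_eq_volume, Measure.addHaar_parallelepiped]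
  rfl

lemma coe_span_range_eq_latticeSet (b : Fin n → EuclideanSpace ℝ (Fin n)) :
    (Submodule.span ℤ (Set.range b) : Set (EuclideanSpace ℝ (Fin n))) = latticeSet b := by
  ext x
  simp [latticeSet, Submodule.mem_span_range_iff_exists_fun, Int.cast_smul_eq_zsmul, eq_comm]

lemma vertexSet_subset_latticeSet {b : Fin n → EuclideanSpace ℝ (Fin n)}
    {x : EuclideanSpace ℝ (Fin n)} (hx : x ∈ latticeSet b) : vertexSet x b ⊆ latticeSet b := by
  rintro _ ⟨lam, hlam, rfl⟩
  rw [← coe_span_range_eq_latticeSet, SetLike.mem_coe] at hx ⊢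
  refine add_mem hx (sum_mem fun i _ ↦ ?_)
  rcases hlam i with h | h
  · simp [h]
  · simpa [h] using Submodule.subset_span (Set.mem_range_self i)

end Lattices

section FundamentalParallelepipeds

variable {n : ℕ} {Λ P : Set (EuclideanSpace ℝ (Fin n))} {d : ℝ}

lemma isFundParallelepiped_vadd_parallelepiped {b : Fin n → EuclideanSpace ℝ (Fin n)}
    (hb : LinearIndependent ℝ b) {x : EuclideanSpace ℝ (Fin n)} (hx : x ∈ latticeSet b) :
    IsFundParallelepiped (latticeSet b) (latticeDet b) (x +ᵥ parallelepiped b) :=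
  ⟨x, b, hb, (convexHull_vertexSet x b).symm, vertexSet_subset_latticeSet hx, by
    rw [measure_vadd, volume_parallelepiped_eq_latticeDet]⟩

lemma IsFundParallelepiped.nonempty_inter (hP : IsFundParallelepiped Λ d P) :
    (Λ ∩ P).Nonempty := by
  obtain ⟨x, v, -, rfl, hΛ, -⟩ := hP
  have hx : x ∈ vertexSet x v := ⟨0, fun _ ↦ .inl rfl, by simp⟩
  exact ⟨x, hΛ hx, subset_convexHull ℝ _ hx⟩

lemma IsFundParallelepiped.radius_nonneg (hP : IsFundParallelepiped Λ d P)
    {c : EuclideanSpace ℝ (Fin n)} {r : ℝ} (hPr : P ⊆ Metric.closedBall c r) : 0 ≤ r :=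
  Metric.nonempty_closedBall.1 (hP.nonempty_inter.right.mono hPr)

lemma IsFundParallelepiped.det_pos (hP : IsFundParallelepiped Λ d P) : 0 < d := by
  obtain ⟨x, v, hv, rfl, -, hvol⟩ := hP
  rw [convexHull_vertexSet, measure_vadd] at hvol
  rw [← ENNReal.ofReal_pos, ← hvol]
  exact measure_parallelepiped_pos volume hv
    (hv.span_eq_top_of_card_eq_finrank' (by simp)).ge

lemma IsFundParallelepiped.sqrt_pow_mul_det_le (hP : IsFundParallelepiped Λ d P)
    {c : EuclideanSpace ℝ (Fin n)} {r : ℝ} (hPr : P ⊆ Metric.closedBall c r) :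
    √n ^ n * d ≤ (2 * r) ^ n := by
  have hr : 0 ≤ r := hP.radius_nonneg hPr
  have hd : 0 ≤ d := hP.det_pos.le
  obtain ⟨x, v, -, rfl, -, hvol⟩ := hP
  have : Fact (Module.finrank ℝ (EuclideanSpace ℝ (Fin n)) = n) := ⟨by simp⟩
  rw [convexHull_vertexSet] at hvol hPr
  rw [measure_vadd] at hvol
  simpa [measureReal_def, hvol, hd] using sqrt_pow_mul_volume_real_parallelepiped_le hr hPr

end FundamentalParallelepipeds

section RobustCoverings

variable {n : ℕ} {b : Fin n → EuclideanSpace ℝ (Fin n)} {r : ℝ}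

lemma isRobustCovering_of_forall_exists_isFundParallelepiped (hb : LinearIndependent ℝ b)
    (h : ∀ c, ∃ P, IsFundParallelepiped (latticeSet b) (latticeDet b) P ∧
      P ⊆ Metric.closedBall c r) :
    IsRobustCovering b r := by
  refine ⟨⟨hb, Set.eq_univ_of_forall fun c ↦ ?_⟩, h⟩
  obtain ⟨P, hP, hPr⟩ := h c
  obtain ⟨x, hxΛ, hxP⟩ := hP.nonempty_inter
  refine ⟨x, hxΛ, c - x, ?_, add_sub_cancel x c⟩
  rw [mem_closedBall_zero_iff, ← mem_closedBall_iff_norm']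
  exact hPr hxP

lemma exists_mem_latticeSet_mem_vadd_parallelepiped (hb : LinearIndependent ℝ b)
    (c : EuclideanSpace ℝ (Fin n)) : ∃ x ∈ latticeSet b, c ∈ x +ᵥ parallelepiped b := by
  let B := Module.Basis.mk hb (hb.span_eq_top_of_card_eq_finrank' (by simp)).ge
  have hB : ⇑B = b := Module.Basis.coe_mk ..
  refine ⟨ZSpan.floor B c, ?_, ZSpan.fract B c, ?_, add_sub_cancel _ c⟩
  · rw [← coe_span_range_eq_latticeSet, ← hB]
    exact (ZSpan.floor B c).2
  · rw [← hB]
    exact ZSpan.fundamentalDomain_subset_parallelepiped B (ZSpan.fract_mem_fundamentalDomain B c)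

lemma isRobustCovering_diam_parallelepiped (hb : LinearIndependent ℝ b) :
    IsRobustCovering b (Metric.diam (parallelepiped b)) := by
  refine isRobustCovering_of_forall_exists_isFundParallelepiped hb fun c ↦ ?_
  obtain ⟨x, hx, hc⟩ := exists_mem_latticeSet_mem_vadd_parallelepiped hb c
  refine ⟨_, isFundParallelepiped_vadd_parallelepiped hb hx, fun y hy ↦ ?_⟩
  rw [Metric.mem_closedBall, ← diam_vadd x]
  exact Metric.dist_le_diam_of_mem ((isCompact_parallelepiped b).isBounded.vadd x) hy hc

end RobustCoverings

theorem robust_covering_density_lower_bound_general {n : ℕ}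
    {b : Fin n → EuclideanSpace ℝ (Fin n)} {r : ℝ} {c : EuclideanSpace ℝ (Fin n)}
    {P : Set (EuclideanSpace ℝ (Fin n))}
    (hP : IsFundParallelepiped (latticeSet b) (latticeDet b) P)
    (hPr : P ⊆ Metric.closedBall c r) : nu n / 2 ^ n ≤ coveringDensity b r := by
  have hr : 0 ≤ r := hP.radius_nonneg hPr
  set κ := volume.real (Metric.ball (0 : EuclideanSpace ℝ (Fin n)) 1)
  have hball {s : ℝ} (hs : 0 ≤ s) :
      (volume (Metric.closedBall (0 : EuclideanSpace ℝ (Fin n)) s)).toReal = s ^ n * κ := by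
    simpa [κ, measureReal_def] using
      Measure.addHaar_real_closedBall volume (0 : EuclideanSpace ℝ (Fin n)) hs
  rw [nu, coveringDensity, hball (Real.sqrt_nonneg _), hball hr,
    div_le_div_iff₀ (by positivity) hP.det_pos]
  calc √n ^ n * κ * latticeDet b = √n ^ n * latticeDet b * κ := mul_right_comm ..
    _ ≤ (2 * r) ^ n * κ := by
        gcongr
        exact hP.sqrt_pow_mul_det_le hPr
    _ = r ^ n * κ * 2 ^ n := by ring

lemma IsRobustCovering.nu_div_two_pow_le_coveringDensity {n : ℕ}
    {b : Fin n → EuclideanSpace ℝ (Fin n)} {r : ℝ} (h : IsRobustCovering b r) :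
    nu n / 2 ^ n ≤ coveringDensity b r :=
  let ⟨_, hP, hPr⟩ := h.2 0
  robust_covering_density_lower_bound_general hP hPr

/-- Every robust lattice covering of `ℝⁿ` has density at least `ν_n / 2ⁿ`; in
particular the optimal robust lattice covering density `Θ̃_n` is at least `ν_n / 2ⁿ`. -/
theorem robust_covering_density_lower_bound (n : ℕ) (hn : 1 ≤ n) :
    (∀ (b : Fin n → EuclideanSpace ℝ (Fin n)) (r : ℝ),
      IsRobustCovering b r → nu n / 2 ^ n ≤ coveringDensity b r) ∧
    nu n / 2 ^ n ≤
      sInf {D : ℝ | ∃ (b : Fin n → EuclideanSpace ℝ (Fin n)) (r : ℝ),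
        IsRobustCovering b r ∧ coveringDensity b r = D} := by
  refine ⟨fun b r h ↦ h.nu_div_two_pow_le_coveringDensity, le_csInf ?_ ?_⟩
  · exact ⟨_, _, _, isRobustCovering_diam_parallelepiped
      (EuclideanSpace.basisFun (Fin n) ℝ).toBasis.linearIndependent, rfl⟩
  · rintro _ ⟨b, r, h, rfl⟩
    exact h.nu_div_two_pow_le_coveringDensity

end
end
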